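/- Let K ⊆ ℝ² be a Minkowski centered convex body with s(K) > φ and write s = s(K). Then there exists a well-spread triple p¹, p², p³ of asymmetry points of K such that K' := conv((K ∩ (−K)) ∪ {−s·p¹, −s·p², −s·p³}) is Minkowski centered and satisfies: (i) s(K') = s(K); (ii) τ(K') ≥ τ(K); (iii) there exists p ∈ bd(K' ∩ (−K')) ∩ τ(K')·bd((K' − K')/2) with p ∈ bd(K') ∩ bd(−K'). -/

import Mathlib

open scoped Pointwise RealInnerProductSpace
open Set

noncomputable section

abbrev E2 := EuclideanSpace ℝ (Fin 2)

/-- A convex body: compact convex set with nonempty interior. -/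
def IsConvexBody (K : Set E2) : Prop :=
  Convex ℝ K ∧ IsCompact K ∧ (interior K).Nonempty

/-- circumradius `R(K,C)` -/
def circum (K C : Set E2) : ℝ :=
  sInf {ρ : ℝ | 0 < ρ ∧ ∃ t : E2, K ⊆ ρ • C + {t}}

/-- inradius `r(K,C)` -/
def inrad (K C : Set E2) : ℝ :=
  sSup {ρ : ℝ | 0 < ρ ∧ ∃ t : E2, ρ • C + {t} ⊆ K}

/-- width `w(K,C)` -/
def widthB (K C : Set E2) : ℝ := 2 * inrad (K - K) (C - C)

/-- diameter `D(K,C)` -/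
def diamB (K C : Set E2) : ℝ := 2 * circum (K - K) (C - C)

/-- Minkowski asymmetry `s(K)` -/
def minkAsym (K : Set E2) : ℝ :=
  sInf {ρ : ℝ | 0 < ρ ∧ ∃ c : E2, K - {c} ⊆ ρ • ({c} - K)}

/-- `K` is Minkowski centered -/
def MinkCentered (K : Set E2) : Prop := K ⊆ minkAsym K • (-K)

/-- `τ(K)`: smallest `ρ > 0` with `K ∩ (-K) ⊆ ρ • ((K-K)/2)` -/
def tauB (K : Set E2) : ℝ :=
  sInf {ρ : ℝ | 0 < ρ ∧ K ∩ (-K) ⊆ ρ • ((2:ℝ)⁻¹ • (K - K))}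

/-- golden ratio -/
def phiR : ℝ := (1 + Real.sqrt 5) / 2

def cExpr2 (s : ℝ) : ℝ :=
  (s^2+1)^2 / ((s^2-1) * (s^2+2*s-1+2*Real.sqrt (s*(s^2-1))))

def cExpr3 (s : ℝ) : ℝ := 2*(s^2-2*s-1) / ((s-3)*(s+1))

/-- `ŝ`: the unique `s ∈ (φ,2)` where the two expressions agree. -/
def sHat : ℝ := sInf {s : ℝ | phiR < s ∧ s < 2 ∧ cExpr2 s = cExpr3 s}

def cFun (s : ℝ) : ℝ :=
  if s ≤ phiR then 1 else if s ≤ sHat then cExpr2 s else cExpr3 s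

/-- polar body -/
def polarBody (K : Set E2) : Set E2 := {y | ∀ x ∈ K, (inner ℝ x y : ℝ) ≤ 1}

/-- `γ(K)` -/
def gammaB (K : Set E2) : ℝ :=
  sInf {ρ : ℝ | 0 < ρ ∧
    polarBody ((2:ℝ)⁻¹ • (polarBody K - polarBody K)) ⊆ ρ • convexHull ℝ (K ∪ -K)}

/-- positive hull of two points -/
def posHull2 (a b : E2) : Set E2 := {x | ∃ α β : ℝ, 0 ≤ α ∧ 0 ≤ β ∧ x = α • a + β • b}

/-- asymmetry point of `K`: a point of `bd(K) ∩ bd(−(1/s(K))·K)` -/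
def IsAsymPoint (K : Set E2) (p : E2) : Prop :=
  p ∈ frontier K ∧ p ∈ frontier ((-(minkAsym K)⁻¹) • K)

/-- a well-spread triple of asymmetry points -/
def WellSpread (K : Set E2) (p1 p2 p3 : E2) : Prop :=
  IsAsymPoint K p1 ∧ IsAsymPoint K p2 ∧ IsAsymPoint K p3 ∧
  ∃ a1 a2 a3 : E2, a1 ≠ 0 ∧ a2 ≠ 0 ∧ a3 ≠ 0 ∧
    (∀ x ∈ K, (inner ℝ a1 x : ℝ) ≤ inner ℝ a1 p1) ∧
    (∀ x ∈ K, (inner ℝ a2 x : ℝ) ≤ inner ℝ a2 p2) ∧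
    (∀ x ∈ K, (inner ℝ a3 x : ℝ) ≤ inner ℝ a3 p3) ∧
    (0:E2) ∈ interior (convexHull ℝ {p1, p2, p3}) ∧
    (0:E2) ∈ convexHull ℝ {a1, a2, a3}

/-- two points of `bd(K) ∩ bd(-K)` are consecutive -/
def Consecutive (K : Set E2) (z1 z2 : E2) : Prop :=
  ¬ ∃ z, z ∈ frontier K ∩ frontier (-K) ∧ z ∈ interior (posHull2 z1 z2)

/-- point of the plane from coordinates -/
def pt (x y : ℝ) : E2 := (WithLp.equiv 2 (Fin 2 → ℝ)).symm ![x, y]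

/-- the golden house -/
def goldenHouse : Set E2 :=
  convexHull ℝ {pt 1 0, pt (-1) 0, pt 1 (-1), pt (-1) (-1), pt 0 phiR}



lemma carath (N : Set E2) (x : E2) (hx : x ∈ convexHull ℝ N) :
    ∃ (w : Fin 3 → ℝ) (z : Fin 3 → E2), w ∈ stdSimplex ℝ (Fin 3) ∧ (∀ i, z i ∈ N) ∧
      ∑ i, w i • z i = x := by
  obtain ⟨ι, _, z, w, hz, hai, hw, hw1, hwx⟩ := eq_pos_convex_span_of_mem_convexHull hx
  have hne : Nonempty ι := by
    by_contra h
    rw [not_nonempty_iff] at h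
    simp at hw1
  obtain ⟨i0⟩ := hne
  have hcard : Fintype.card ι ≤ Fintype.card (Fin 3) := by
    have := hai.card_le_finrank_succ
    have h2 := Submodule.finrank_le (vectorSpan ℝ (Set.range z))
    have h3 : Module.finrank ℝ E2 = 2 := by simp
    simp only [Fintype.card_fin]
    omega
  obtain ⟨e⟩ := Function.Embedding.nonempty_of_card_le hcard
  have hw' : ∀ i ∉ Set.range e, Function.extend e w 0 i = 0 := by
    intro i hi
    rw [Function.extend_apply' _ _ _ (by simpa using hi)]; rfl
  refine ⟨Function.extend e w 0, Function.extend e z (fun _ => z i0), ⟨?_, ?_⟩, ?_, ?_⟩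
  · intro i
    by_cases h : ∃ j, e j = i
    · obtain ⟨j, rfl⟩ := h
      rw [e.injective.extend_apply]; exact (hw j).le
    · rw [hw' i (by simpa using h)]
  · rw [← hw1]
    exact (Fintype.sum_of_injective e e.injective _ _ hw'
      (fun i => (e.injective.extend_apply _ _ _).symm)).symm
  · intro i
    by_cases h : ∃ j, e j = i
    · obtain ⟨j, rfl⟩ := h
      rw [e.injective.extend_apply]; exact hz ⟨j, rfl⟩
    · rw [Function.extend_apply' _ _ _ h]; exact hz ⟨i0, rfl⟩
  · rw [← hwx]
    refine (Fintype.sum_of_injective e e.injective _ _ (fun i hi => ?_) (fun i => ?_)).symm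
    · rw [hw' i hi, zero_smul]
    · rw [e.injective.extend_apply, e.injective.extend_apply]

lemma compact_hull (N : Set E2) (hN : IsCompact N) : IsCompact (convexHull ℝ N) := by
  have h1 : IsCompact ((stdSimplex ℝ (Fin 3)) ×ˢ (Set.univ.pi (fun _ : Fin 3 => N))) :=
    (isCompact_stdSimplex ℝ (Fin 3)).prod (isCompact_univ_pi fun _ => hN)
  have h2 : Continuous (fun q : (Fin 3 → ℝ) × (Fin 3 → E2) => ∑ i, q.1 i • q.2 i) := by fun_prop
  convert h1.image h2 using 1
  ext x
  constructor
  · intro hx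
    obtain ⟨w, z, hw, hz, hx⟩ := carath N x hx
    exact ⟨(w, z), ⟨hw, fun i _ => hz i⟩, hx⟩
  · rintro ⟨⟨w, z⟩, ⟨hw, hz⟩, rfl⟩
    exact (convex_convexHull ℝ N).sum_mem (fun i _ => hw.1 i) hw.2
      (fun i _ => subset_convexHull ℝ N (hz i trivial))


lemma not_int (K : Set E2) (a p : E2) (ha : a ≠ 0)
    (h : ∀ x ∈ K, (inner ℝ a x : ℝ) ≤ inner ℝ a p) : p ∉ interior K := by
  intro hp
  have hc : ContinuousAt (fun t : ℝ => p + t • a) 0 := by fun_prop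
  have h1 : ∀ᶠ t in nhds (0:ℝ), p + t • a ∈ K := by
    apply hc
    simpa using mem_interior_iff_mem_nhds.1 hp
  obtain ⟨t, ht, htp⟩ := ((h1.filter_mono nhdsWithin_le_nhds).and
    (self_mem_nhdsWithin : Set.Ioi (0:ℝ) ∈ nhdsWithin 0 (Set.Ioi 0))).exists
  have := h _ ht
  rw [inner_add_right, inner_smul_right] at this
  have h2 : 0 < (inner ℝ a a : ℝ) := real_inner_self_pos.2 ha
  have : 0 < t * inner ℝ a a := mul_pos htp h2
  linarith

lemma supp_pos (K : Set E2) (a p : E2) (ha : a ≠ 0) (h0 : (0:E2) ∈ interior K)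
    (h : ∀ x ∈ K, (inner ℝ a x : ℝ) ≤ inner ℝ a p) : 0 < (inner ℝ a p : ℝ) := by
  by_contra hn
  refine not_int K a 0 ha (fun x hx => ?_) h0
  have := h x hx
  simp only [inner_zero_right]
  linarith

lemma exists_supp (K : Set E2) (hK : Convex ℝ K) (hi : (interior K).Nonempty) (p : E2)
    (hp : p ∉ interior K) : ∃ a : E2, a ≠ 0 ∧ ∀ x ∈ K, (inner ℝ a x : ℝ) ≤ inner ℝ a p := by
  obtain ⟨f, hf⟩ := geometric_hahn_banach_open_point hK.interior isOpen_interior hp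
  refine ⟨(InnerProductSpace.toDual ℝ E2).symm f, ?_, ?_⟩
  · intro h
    obtain ⟨y, hy⟩ := hi
    have : f = 0 := by simpa using h
    have h2 := hf y hy
    simp [this] at h2
  · intro x hx
    simp only [InnerProductSpace.toDual_symm_apply]
    have hx' : x ∈ closure (interior K) := by
      rw [hK.closure_interior_eq_closure_of_nonempty_interior hi]
      exact subset_closure hx
    exact le_on_closure (fun y hy => (hf y hy).le) f.continuous.continuousOn
      continuousOn_const hx'

lemma zero_int (K : Set E2) (hK : Convex ℝ K) (hi : (interior K).Nonempty) (s : ℝ) (hs : 0 < s)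
    (hc : K ⊆ s • (-K)) : (0:E2) ∈ interior K := by
  obtain ⟨y, hy⟩ := hi
  obtain ⟨k, hk, hky⟩ := hc (interior_subset hy)
  have hk' : -k ∈ K := by simpa using hk
  have := hK.combo_interior_self_mem_interior hy hk' (a := 1/(1+s)) (b := s/(1+s))
    (by positivity) (by positivity) (by field_simp)
  convert this using 1
  simp only at hky
  rw [← hky]
  module

lemma exists_touch (K : Set E2) (hK : IsConvexBody K) (hc : MinkCentered K)
    (hs : 0 < minkAsym K) :
    (0:E2) ∈ convexHull ℝ {a : E2 | ‖a‖ = 1 ∧ ∃ p ∈ (-(minkAsym K)⁻¹) • K,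
      ∀ x ∈ K, (inner ℝ a x : ℝ) ≤ inner ℝ a p} := by
  obtain ⟨hconv, hcomp, hint⟩ := hK
  set s := minkAsym K with hsdef
  set L := (-s⁻¹) • K with hL
  set N := {a : E2 | ‖a‖ = 1 ∧ ∃ p ∈ L, ∀ x ∈ K, (inner ℝ a x : ℝ) ≤ inner ℝ a p} with hN
  have hLK : L ⊆ K := by
    rintro _ ⟨y, hy, rfl⟩
    obtain ⟨k, hk, hky⟩ := hc hy
    have hk' : -k ∈ K := by simpa using hk
    convert hk' using 1
    simp only at hky ⊢
    rw [← hky, smul_smul, ← hsdef]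
    field_simp
    simp
  have hLc : IsCompact L := hcomp.smul _
  have hsph : IsCompact (Metric.sphere (0:E2) 1) := isCompact_sphere _ _
  have hNc : IsCompact N := by
    have h1 : IsCompact ((Metric.sphere (0:E2) 1 ×ˢ L) ∩
        {q : E2 × E2 | ∀ x ∈ K, (inner ℝ q.1 x : ℝ) ≤ inner ℝ q.1 q.2}) := by
      apply (hsph.prod hLc).inter_right
      simp only [Set.ofPred_forall]
      refine isClosed_biInter fun x hx => isClosed_le (by fun_prop) (by fun_prop)
    convert h1.image continuous_fst using 1
    ext a
    simp only [hN, Set.mem_ofPred_eq, Set.mem_image, Set.mem_inter_iff, Set.mem_prod,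
      mem_sphere_zero_iff_norm, Prod.exists, exists_and_right, exists_eq_right]
    constructor
    · rintro ⟨h, p, hp, hx⟩; exact ⟨p, ⟨h, hp⟩, hx⟩
    · rintro ⟨p, ⟨h, hp⟩, hx⟩; exact ⟨h, p, hp, hx⟩
  by_contra h0
  obtain ⟨f, u, hu1, hu2⟩ := geometric_hahn_banach_closed_point (convex_convexHull ℝ N)
    (compact_hull N hNc).isClosed h0
  set v := (InnerProductSpace.toDual ℝ E2).symm f with hv
  have hvN : ∀ a ∈ N, (inner ℝ a v : ℝ) < 0 := by
    intro a ha
    have h1 := hu1 a (subset_convexHull ℝ N ha)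
    rw [real_inner_comm, hv, InnerProductSpace.toDual_symm_apply]
    simp at hu2
    linarith
  -- translate fits in interior
  have key : ∃ n : ℕ, ∀ p ∈ L, p + ((n:ℝ)+1)⁻¹ • v ∈ interior K := by
    by_contra hcon
    push Not at hcon
    choose p hpL hpn using hcon
    have h2 : ∀ n, ∃ a : E2, ‖a‖ = 1 ∧ ∀ x ∈ K, (inner ℝ a x : ℝ) ≤
        inner ℝ a (p n + ((n:ℝ)+1)⁻¹ • v) := by
      intro n
      obtain ⟨a, ha, hax⟩ := exists_supp K hconv hint _ (hpn n)
      refine ⟨‖a‖⁻¹ • a, ?_, ?_⟩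
      · rw [norm_smul, norm_inv, norm_norm, inv_mul_cancel₀ (norm_ne_zero_iff.2 ha)]
      · intro x hx
        rw [real_inner_smul_left, real_inner_smul_left]
        exact mul_le_mul_of_nonneg_left (hax x hx) (by positivity)
    choose a ha hax using h2
    obtain ⟨⟨a0, p0⟩, hmem, φ, hφ, hlim⟩ := (hsph.prod hLc).tendsto_subseq
      (x := fun n => (a n, p n)) (fun n => ⟨by simpa using ha n, hpL n⟩)
    have la : Filter.Tendsto (fun n => a (φ n)) Filter.atTop (nhds a0) :=
      (continuous_fst.tendsto _).comp hlim
    have lp : Filter.Tendsto (fun n => p (φ n)) Filter.atTop (nhds p0) :=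
      (continuous_snd.tendsto _).comp hlim
    have le0 : Filter.Tendsto (fun n => (((φ n : ℕ):ℝ)+1)⁻¹) Filter.atTop (nhds 0) := by
      have := (tendsto_one_div_add_atTop_nhds_zero_nat (𝕜 := ℝ)).comp hφ.tendsto_atTop
      simpa [Function.comp_def] using this
    have ha0 : a0 ∈ N := by
      refine ⟨by simpa using hmem.1, p0, hmem.2, fun x hx => ?_⟩
      have t1 : Filter.Tendsto (fun n => (inner ℝ (a (φ n)) x : ℝ)) Filter.atTop
        (nhds (inner ℝ a0 x)) := la.inner tendsto_const_nhds
      have t2 : Filter.Tendsto (fun n => (inner ℝ (a (φ n))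
          (p (φ n) + (((φ n : ℕ):ℝ)+1)⁻¹ • v) : ℝ)) Filter.atTop
        (nhds (inner ℝ a0 (p0 + (0:ℝ) • v))) :=
          la.inner (lp.add (le0.smul tendsto_const_nhds))
      simp only [zero_smul, add_zero] at t2
      exact le_of_tendsto_of_tendsto' t1 t2 (fun n => hax _ x hx)
    have h3 : 0 ≤ (inner ℝ a0 v : ℝ) := by
      have t1 : Filter.Tendsto (fun n => (inner ℝ (a (φ n)) v : ℝ)) Filter.atTop
        (nhds (inner ℝ a0 v)) := la.inner tendsto_const_nhds
      refine ge_of_tendsto' t1 (fun n => ?_)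
      have := hax (φ n) _ (hLK (hpL (φ n)))
      rw [inner_add_right, inner_smul_right] at this
      have h5 : 0 ≤ (((φ n : ℕ):ℝ)+1)⁻¹ * (inner ℝ (a (φ n)) v : ℝ) := by linarith
      exact nonneg_of_mul_nonneg_right h5 (by positivity)
    exact absurd (hvN a0 ha0) (not_lt.2 h3)
  obtain ⟨n, hn⟩ := key
  set e : ℝ := ((n:ℝ)+1)⁻¹ with he
  -- enlarge
  have hev : ∀ᶠ t in nhds (1:ℝ), ∀ p ∈ L, t • (p + e • v) ∈ interior K := by
    apply hLc.eventually_forall_of_forall_eventually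
    intro p hp
    have hcont : ContinuousAt (fun q : ℝ × E2 => q.1 • (q.2 + e • v)) (1, p) := by fun_prop
    have : interior K ∈ nhds ((fun q : ℝ × E2 => q.1 • (q.2 + e • v)) (1, p)) := by
      simpa using isOpen_interior.mem_nhds (hn p hp)
    have h6 := hcont this
    exact h6
  obtain ⟨t, ht, ht1⟩ := ((hev.filter_mono nhdsWithin_le_nhds).and
    (self_mem_nhdsWithin : Set.Ioi (1:ℝ) ∈ nhdsWithin 1 (Set.Ioi 1))).exists
  have ht1' : 1 < t := ht1
  have ht0 : 0 < t := by linarith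
  have hρ : s / t < s := div_lt_self hs ht1'
  have hρ0 : 0 < s / t := by positivity
  have : s ≤ s / t := by
    rw [hsdef]
    apply csInf_le ⟨0, fun x hx => hx.1.le⟩
    rw [← hsdef]
    refine ⟨hρ0, (s * e / (1 + s / t)) • v, ?_⟩
    rintro _ ⟨x, hx, c, rfl, rfl⟩
    have hx2 := interior_subset (ht ((-s⁻¹) • x) (Set.smul_mem_smul_set hx))
    refine ⟨_, ⟨_, rfl, _, hx2, rfl⟩, ?_⟩
    simp only
    have hst : (1 + s / t) ≠ 0 := by positivity
    match_scalars <;> field_simp <;> ring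
  linarith

lemma real_neg (s w1 w2 w3 m12 m13 : ℝ) (hs1 : 1 < s) (hs : s + 1 < s^2)
    (hw : 0 < w1 + w2 + w3) (h3 : 0 ≤ w3) (hw2 : 0 ≤ w2)
    (b2 : (1+s) * w2 ≤ w1 + w2 + w3) (b3 : (1+s) * w3 ≤ w1 + w2 + w3)
    (hm : w1 + w2 * m12 + w3 * m13 = 0) (h13 : -(1/s) ≤ m13) : m12 < 0 := by
  by_contra hn
  push Not at hn
  have e1 : 0 ≤ w2 * m12 := mul_nonneg hw2 hn
  have e2 : w3 * (-(1/s)) ≤ w3 * m13 := mul_le_mul_of_nonneg_left h13 h3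
  have e3 : s * w1 ≤ w3 := by
    have : w1 ≤ w3 * (1/s) := by linarith
    have h4 := mul_le_mul_of_nonneg_left this (by linarith : 0 ≤ s)
    have h5 : s * (w3 * (1/s)) = w3 := by field_simp
    linarith
  -- s W ≤ (s+1) w3 + s w2
  have e4 : s * (w1 + w2 + w3) ≤ (w1 + w2 + w3) + s * w2 := by nlinarith
  have e5 : s * ((1+s) * w2) ≤ s * (w1 + w2 + w3) :=
    mul_le_mul_of_nonneg_left b2 (by linarith)
  have e6 : (1+s) * (s * (w1 + w2 + w3)) ≤ (1+s) * ((w1 + w2 + w3) + s * w2) :=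
    mul_le_mul_of_nonneg_left e4 (by linarith)
  nlinarith [mul_pos hw (sub_pos.2 hs)]

lemma real_bd (s w1 w2 w3 m12 m13 : ℝ) (hs1 : 1 < s)
    (h3 : 0 ≤ w3) (hw2 : 0 ≤ w2)
    (hm : w1 + w2 * m12 + w3 * m13 = 0) (h12 : -(1/s) ≤ m12) (h13 : -(1/s) ≤ m13) :
    (1+s) * w1 ≤ w1 + w2 + w3 := by
  have e1 : w2 * (-(1/s)) ≤ w2 * m12 := mul_le_mul_of_nonneg_left h12 hw2
  have e2 : w3 * (-(1/s)) ≤ w3 * m13 := mul_le_mul_of_nonneg_left h13 h3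
  have : w1 ≤ (w2 + w3) * (1/s) := by linarith
  have h4 := mul_le_mul_of_nonneg_left this (by linarith : 0 ≤ s)
  have h5 : s * ((w2 + w3) * (1/s)) = w2 + w3 := by field_simp
  linarith

/-- final real contradiction; `uij ≥ 0` is `- ℓ_j(p^i)`. -/
lemma real_core (s α γ x y u13 u31 u21 u23 : ℝ) (hs1 : 1 < s) (hs : s + 1 < s^2)
    (hα : 0 ≤ α) (hγ : 0 ≤ γ) (h13 : 0 ≤ u13) (h31 : 0 ≤ u31) (h21 : 0 ≤ u21) (h23 : 0 ≤ u23)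
    (g31 : u31 ≤ 1/s) (g23 : u23 ≤ 1/s)
    (c1 : α + γ * u31 ≤ 1) (c3 : γ + α * u13 ≤ 1) (c : 1 ≤ α + γ)
    (hb : x * (α + γ * u31) - y * (γ + α * u13) = 1)
    (b3 : -(1/s) ≤ y - x * u31) (b21 : x - y * u13 < - x * u21 - y * u23)
    (b2 : 0 < - x * u21 - y * u23) : False := by
  have hsi : 1/s < 1 := by rw [div_lt_one (by linarith)]; exact hs1
  have hsi0 : 0 < 1/s := by positivity
  have hc1 : 0 ≤ α + γ * u31 := by positivity
  have hc3 : 0 ≤ γ + α * u13 := by positivity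
  rcases lt_or_ge x 0 with hx | hx
  · rcases lt_or_ge y 0 with hy | hy
    · have e1 : -y * (γ + α * u13) ≤ -y * 1 := mul_le_mul_of_nonneg_left c3 (by linarith)
      have e2 : u31 ≤ α + γ * u31 := by nlinarith
      have e3 : -x * u31 ≤ -x * (α + γ * u31) := mul_le_mul_of_nonneg_left e2 (by linarith)
      linarith
    · have := mul_nonneg hy hc3
      have := mul_nonneg (neg_nonneg.2 hx.le) hc1
      linarith
  · have hy : y < 0 := by
      by_contra hy
      push Not at hy
      have := mul_nonneg hx h21
      have := mul_nonneg hy h23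
      linarith
    have e0 : x * (α + γ * u31) ≤ x * 1 := mul_le_mul_of_nonneg_left c1 hx
    have e1 : -y * (γ + α * u13) ≤ -y * 1 := mul_le_mul_of_nonneg_left c3 (by linarith)
    have e2 : 1 ≤ x - y := by linarith
    have e3 : 0 ≤ x * u31 := mul_nonneg hx h31
    have e4 : -y ≤ 1/s := by linarith
    have e5 : -y * u23 ≤ -y * (1/s) := mul_le_mul_of_nonneg_left g23 (by linarith)
    have e6 : 0 ≤ -y * u13 := mul_nonneg (by linarith) h13
    have e7 : 0 ≤ x * u21 := mul_nonneg hx h21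
    have e8 : x < -y * (1/s) := by linarith
    have e9 : 1 < -y * (1 + 1/s) := by linarith
    have e10 : -y * (1 + 1/s) ≤ 1/s * (1 + 1/s) := mul_le_mul_of_nonneg_right e4 (by linarith)
    have e11 : 1/s * (1 + 1/s) = (s+1)/s^2 := by field_simp
    have e12 : (s+1)/s^2 < 1 := by rw [div_lt_one (by positivity)]; exact hs
    linarith

lemma inner2 (x y : E2) : (inner ℝ x y : ℝ) = x 0 * y 0 + x 1 * y 1 := by
  simp [PiLp.inner_apply, Fin.sum_univ_two]; ring

lemma basis_zero (l1 l2 p1 p2 y : E2) (h1 : (inner ℝ l1 p1 : ℝ) = 1) (h2 : (inner ℝ l2 p2 : ℝ) = 1)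
    (hD : (inner ℝ l1 p2 : ℝ) * inner ℝ l2 p1 < 1) (hy1 : (inner ℝ l1 y : ℝ) = 0)
    (hy2 : (inner ℝ l2 y : ℝ) = 0) : y = 0 := by
  rw [inner2] at *
  rw [inner2] at hD
  have hdet : (l1 0 * l2 1 - l1 1 * l2 0) ≠ 0 := by
    intro h
    have : (l1 0 * p1 0 + l1 1 * p1 1) * (l2 0 * p2 0 + l2 1 * p2 1)
      - (l1 0 * p2 0 + l1 1 * p2 1) * (l2 0 * p1 0 + l2 1 * p1 1)
      = (l1 0 * l2 1 - l1 1 * l2 0) * (p1 0 * p2 1 - p1 1 * p2 0) := by ring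
    rw [h, h1, h2] at this
    linarith
  have e0 : (l1 0 * l2 1 - l1 1 * l2 0) * y 0 = 0 := by linear_combination l2 1 * hy1 - l1 1 * hy2
  have e1 : (l1 0 * l2 1 - l1 1 * l2 0) * y 1 = 0 := by linear_combination l1 0 * hy2 - l2 0 * hy1
  ext i
  fin_cases i
  · simpa [hdet] using e0
  · simpa [hdet] using e1

/-- the configuration of touching points -/
structure Conf (s : ℝ) (K : Set E2) (p l : Fin 3 → E2) : Prop where
  s1 : 1 < s
  s2 : s + 1 < s^2
  one : ∀ i, (inner ℝ (l i) (p i) : ℝ) = 1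
  le1 : ∀ i, ∀ x ∈ K, (inner ℝ (l i) x : ℝ) ≤ 1
  lo : ∀ i j, i ≠ j → -(1/s) ≤ (inner ℝ (l j) (p i) : ℝ)
  hi : ∀ i j, i ≠ j → (inner ℝ (l j) (p i) : ℝ) < 0
  pK : ∀ i, p i ∈ K
  qK : ∀ i, (-s) • p i ∈ K

lemma Conf.D {s : ℝ} {K : Set E2} {p l : Fin 3 → E2} (h : Conf s K p l) {i j : Fin 3}
    (hij : i ≠ j) : (inner ℝ (l i) (p j) : ℝ) * inner ℝ (l j) (p i) < 1 := by
  have a1 := h.lo i j hij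
  have a2 := h.hi i j hij
  have a3 := h.lo j i hij.symm
  have a4 := h.hi j i hij.symm
  have := h.s1
  have hsi : 1/s < 1 := by rw [div_lt_one (by linarith)]; exact this
  nlinarith

lemma Conf.decomp {s : ℝ} {K : Set E2} {p l : Fin 3 → E2} (h : Conf s K p l) {i j : Fin 3}
    (hij : i ≠ j) (x : E2) :
    x = (((inner ℝ (l i) x : ℝ) - inner ℝ (l i) (p j) * inner ℝ (l j) x) /
        (1 - inner ℝ (l i) (p j) * inner ℝ (l j) (p i))) • p i +
      (((inner ℝ (l j) x : ℝ) - inner ℝ (l j) (p i) * inner ℝ (l i) x) /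
        (1 - inner ℝ (l i) (p j) * inner ℝ (l j) (p i))) • p j := by
  have hD := h.D hij
  have hD' : (1 - (inner ℝ (l i) (p j) : ℝ) * inner ℝ (l j) (p i)) ≠ 0 := by linarith
  rw [← sub_eq_zero]
  apply basis_zero (l i) (l j) (p i) (p j) _ (h.one i) (h.one j) hD
  · simp only [inner_sub_right, inner_add_right, inner_smul_right, h.one]
    field_simp
    ring
  · simp only [inner_sub_right, inner_add_right, inner_smul_right, h.one]
    field_simp
    ring

/-- negative combination -/
lemma Conf.negcomb {s : ℝ} {K : Set E2} {p l : Fin 3 → E2} (h : Conf s K p l) {i j k : Fin 3}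
    (hij : i ≠ j) (hik : i ≠ k) (hjk : j ≠ k) :
    ∃ c d : ℝ, 0 < c ∧ 0 < d ∧ p k = (-c) • p i + (-d) • p j := by
  have hD := h.D hij
  have hd := h.decomp hij (p k)
  have a1 := h.hi k i hik.symm
  have a2 := h.hi k j hjk.symm
  have a3 := h.hi i j hij
  have a4 := h.hi j i hij.symm
  refine ⟨_, _, ?_, ?_, hd.trans (congrArg₂ (fun x y : ℝ => x • p i + y • p j)
    (neg_neg _).symm (neg_neg _).symm)⟩
  · rw [← neg_div]
    apply div_pos _ (by linarith)
    nlinarith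
  · rw [← neg_div]
    apply div_pos _ (by linarith)
    nlinarith

lemma Conf.zero_int {s : ℝ} {K : Set E2} {p l : Fin 3 → E2} (h : Conf s K p l) :
    (0:E2) ∈ interior (convexHull ℝ {p 0, p 1, p 2}) := by
  obtain ⟨c, d, hc, hd, h2⟩ := h.negcomb (i := 0) (j := 1) (k := 2) (by decide) (by decide) (by decide)
  have hcd : 0 < 1 + c + d := by linarith
  have hdec := h.decomp (i := 0) (j := 1) (by decide)
  set D := (1 - (inner ℝ (l 0) (p 1) : ℝ) * inner ℝ (l 1) (p 0)) with hDdef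
  have hD : 0 < D := by have := h.D (i := 0) (j := 1) (by decide); linarith
  let f : E2 → ℝ := fun x => ((inner ℝ (l 0) x : ℝ) - inner ℝ (l 0) (p 1) * inner ℝ (l 1) x) / D
  let g : E2 → ℝ := fun x => ((inner ℝ (l 1) x : ℝ) - inner ℝ (l 1) (p 0) * inner ℝ (l 0) x) / D
  have hf : Continuous f := by fun_prop
  have hg : Continuous g := by fun_prop
  have f0 : f 0 = 0 := by simp [f]
  have g0 : g 0 = 0 := by simp [g]
  let U : Set E2 := {x | 0 < c * (1 - f x - g x) / (1 + c + d) + f x} ∩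
    {x | 0 < d * (1 - f x - g x) / (1 + c + d) + g x} ∩ {x | 0 < (1 - f x - g x) / (1 + c + d)}
  have hU : IsOpen U := by
    refine ((isOpen_lt (by fun_prop) (by fun_prop)).inter
      (isOpen_lt (by fun_prop) (by fun_prop))).inter (isOpen_lt (by fun_prop) (by fun_prop))
  refine mem_interior.2 ⟨U, ?_, hU, ?_⟩
  · intro x hx
    obtain ⟨⟨x1, x2⟩, x3⟩ := hx
    have hx' : x = f x • p 0 + g x • p 1 := hdec x
    have hcx := (convex_convexHull ℝ {p 0, p 1, p 2}).sum_mem (t := Finset.univ)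
      (w := ![c * (1 - f x - g x) / (1 + c + d) + f x, d * (1 - f x - g x) / (1 + c + d) + g x,
        (1 - f x - g x) / (1 + c + d)]) (z := p) (by
          intro i _
          fin_cases i
          · exact le_of_lt x1
          · exact le_of_lt x2
          · exact le_of_lt x3) (by
          simp [Fin.sum_univ_three]; field_simp; ring) (by
          intro i _
          apply subset_convexHull
          fin_cases i <;> simp)
    convert hcx using 1
    simp only [Fin.sum_univ_three, Matrix.cons_val_zero, Matrix.cons_val_one, Matrix.cons_val]
    rw [h2]
    nth_rewrite 1 [hx']
    match_scalars <;> field_simp <;> ring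
  · simp only [U, Set.mem_inter_iff, Set.mem_ofPred_eq, f0, g0]
    refine ⟨⟨?_, ?_⟩, ?_⟩ <;> simp <;> positivity

/-- every vector lies in a sector `cone(p i, - p j)` -/
lemma Conf.sector {s : ℝ} {K : Set E2} {p l : Fin 3 → E2} (h : Conf s K p l) (x : E2) :
    ∃ i j k : Fin 3, i ≠ j ∧ i ≠ k ∧ j ≠ k ∧ ∃ α γ : ℝ, 0 ≤ α ∧ 0 ≤ γ ∧
      x = α • p i - γ • p j := by
  obtain ⟨c, d, hc, hd, h2⟩ := h.negcomb (i := 0) (j := 1) (k := 2) (by decide) (by decide) (by decide)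
  obtain ⟨a, b, hx⟩ : ∃ a b : ℝ, x = a • p 0 + b • p 1 := ⟨_, _, h.decomp (by decide) x⟩
  have key0 : x = (a - b * c / d) • p 0 - (b / d) • p 2 := by
    rw [h2, hx]; match_scalars <;> field_simp; ring
  have key1 : x = (b - a * d / c) • p 1 - (a / c) • p 2 := by
    rw [h2, hx]; match_scalars <;> field_simp; ring
  have hcd : (b - a * d / c) = -(a - b * c / d) * (d / c) := by field_simp; ring
  rcases le_total 0 a with ha | ha <;> rcases le_total 0 b with hb | hb
  · rcases le_total 0 (a - b * c / d) with h0 | h0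
    · exact ⟨0, 2, 1, by decide, by decide, by decide, _, _, h0, by positivity, key0⟩
    · refine ⟨1, 2, 0, by decide, by decide, by decide, _, _, ?_, by positivity, key1⟩
      rw [hcd]; exact mul_nonneg (by linarith) (by positivity)
  · exact ⟨0, 1, 2, by decide, by decide, by decide, a, -b, ha, by linarith, by rw [hx]; module⟩
  · exact ⟨1, 0, 2, by decide, by decide, by decide, b, -a, hb, by linarith, by rw [hx]; module⟩
  · rcases le_total 0 (a - b * c / d) with h0 | h0
    · refine ⟨2, 1, 0, by decide, by decide, by decide, -(a / c), -(b - a * d / c), ?_, ?_, ?_⟩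
      · rw [← neg_div]; exact div_nonneg (by linarith) hc.le
      · rw [hcd, neg_mul, neg_neg]; positivity
      · rw [key1]; module
    · refine ⟨2, 0, 1, by decide, by decide, by decide, -(b / d), -(a - b * c / d), ?_, ?_, ?_⟩
      · rw [← neg_div]; exact div_nonneg (by linarith) hd.le
      · linarith
      · rw [key0]; module

lemma Conf.bound {s : ℝ} {K : Set E2} {p l : Fin 3 → E2} (h : Conf s K p l)
    (hgen : K ⊆ convexHull ℝ ((K ∩ -K) ∪ Set.range (fun i => (-s) • p i)))
    {i j k : Fin 3} (hij : i ≠ j) (hik : i ≠ k) (hjk : j ≠ k) (z : E2) (hz : z ∈ K) (hz' : -z ∈ K)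
    (α γ : ℝ) (hα : 0 ≤ α) (hγ : 0 ≤ γ) (hzα : z = α • p i - γ • p j)
    (b : E2) (hb : ∀ x ∈ K, (inner ℝ b x : ℝ) ≤ 1) (hbz : (inner ℝ b z : ℝ) = 1) :
    ∀ x ∈ K, -(inner ℝ b x : ℝ) ≤ max 1 (s * inner ℝ b (p i)) := by
  have hs1 := h.s1
  have hconv : Convex ℝ {x : E2 | -(inner ℝ b x : ℝ) ≤ max 1 (s * inner ℝ b (p i))} := by
    have : {x : E2 | -(inner ℝ b x : ℝ) ≤ max 1 (s * inner ℝ b (p i))} =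
      {x : E2 | innerSL ℝ (-b) x ≤ max 1 (s * inner ℝ b (p i))} := by
        ext x; simp
    rw [this]
    exact convex_halfSpace_le (innerSL ℝ (-b)).toLinearMap.isLinear _
  intro x hx
  refine convexHull_min ?_ hconv (hgen hx)
  -- inequalities for p's
  have hB1 : ∀ m, (inner ℝ b (p m) : ℝ) ≤ 1 := fun m => hb _ (h.pK m)
  have hB2 : ∀ m, -(1/s) ≤ (inner ℝ b (p m) : ℝ) := by
    intro m
    have := hb _ (h.qK m)
    rw [inner_smul_right] at this
    rw [neg_le, le_div_iff₀ (by linarith)]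
    linarith
  have hz1 : (inner ℝ (l i) z : ℝ) ≤ 1 := h.le1 i z hz
  have hz3 : (inner ℝ (l j) (-z) : ℝ) ≤ 1 := h.le1 j _ hz'
  rw [inner_neg_right] at hz3
  rw [hzα] at hz1 hz3 hbz
  rw [inner_sub_right, inner_smul_right, inner_smul_right] at hz1 hz3 hbz
  rw [h.one] at hz1 hz3
  have lij := h.lo i j hij
  have lji := h.lo j i hij.symm
  have lki := h.lo k i hik.symm
  have lkj := h.lo k j hjk.symm
  have gij := h.hi i j hij
  have gji := h.hi j i hij.symm
  have gki := h.hi k i hik.symm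
  have gkj := h.hi k j hjk.symm
  have hD := h.D hij
  have hsi : 1/s < 1 := by rw [div_lt_one (by linarith)]; exact hs1
  have main : ∀ m, s * (inner ℝ b (p m) : ℝ) ≤ max 1 (s * inner ℝ b (p i)) := by
    intro m
    have hm : m = i ∨ m = j ∨ m = k := by
      clear * - hij hik hjk
      revert m i j k; decide
    by_contra hcon
    push Not at hcon
    obtain ⟨c1, c2⟩ := max_lt_iff.1 hcon
    have c2' : (inner ℝ b (p i) : ℝ) < inner ℝ b (p m) := lt_of_mul_lt_mul_left c2 (by linarith)
    have c1' : 0 < (inner ℝ b (p m) : ℝ) := by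
      by_contra hh
      push Not at hh
      nlinarith
    rcases hm with rfl | rfl | rfl
    · exact lt_irrefl _ c2'
    · -- m = j
      have hα1 : α ≤ 1 := by nlinarith
      have t1 := mul_nonneg hγ c1'.le
      have t2 : 1 ≤ α * (inner ℝ b (p i) : ℝ) := by linarith
      have t3 : 1 ≤ (inner ℝ b (p i) : ℝ) := by
        by_contra hh
        push Not at hh
        have t4 : α * (inner ℝ b (p i) : ℝ) ≤ α * 1 := mul_le_mul_of_nonneg_left hh.le hα
        have t5 : 1 = α := by linarith
        rw [← t5] at t2
        linarith
      have := hB1 m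
      linarith
    · -- m = k
      set u13 := -(inner ℝ (l j) (p i) : ℝ) with hu13
      set u31 := -(inner ℝ (l i) (p j) : ℝ) with hu31
      set u21 := -(inner ℝ (l i) (p m) : ℝ) with hu21
      set u23 := -(inner ℝ (l j) (p m) : ℝ) with hu23
      have hD2 : u31 * u13 < 1 := by rw [hu13, hu31]; linarith
      have hdec := h.decomp hij (p m)
      have hBm := congrArg (fun v => (inner ℝ b v : ℝ)) hdec
      simp only [inner_add_right, inner_smul_right] at hBm
      have r13 : (inner ℝ (l j) (p i) : ℝ) = -u13 := by rw [hu13]; ring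
      have r31 : (inner ℝ (l i) (p j) : ℝ) = -u31 := by rw [hu31]; ring
      have r21 : (inner ℝ (l i) (p m) : ℝ) = -u21 := by rw [hu21]; ring
      have r23 : (inner ℝ (l j) (p m) : ℝ) = -u23 := by rw [hu23]; ring
      rw [r13, r31, r21, r23] at hBm
      have hB3 := hB2 j
      have hBi1 := hB1 i
      have hBj : -(inner ℝ b (p j) : ℝ) ≤ 1 := by linarith [hB2 j]
      generalize (inner ℝ b (p i) : ℝ) = B1 at *
      generalize (inner ℝ b (p j) : ℝ) = B3 at *
      generalize (inner ℝ b (p m) : ℝ) = B2 at *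
      have hDne : (1 - u31 * u13) ≠ 0 := by linarith
      have hDne' : (1 - -u31 * -u13) ≠ 0 := by rw [neg_mul_neg]; exact hDne
      -- x - y u13 = B1 ; y - x u31 = B3
      set X := (B1 + B3 * u13) / (1 - u31 * u13) with hX
      set Y := (B3 + B1 * u31) / (1 - u31 * u13) with hY
      have eX : X - Y * u13 = B1 := by
        rw [hX, hY, div_mul_eq_mul_div, ← sub_div, div_eq_iff hDne]; ring
      have eY : Y - X * u31 = B3 := by
        rw [hX, hY, div_mul_eq_mul_div, ← sub_div, div_eq_iff hDne]; ring
      have eB : B2 = - X * u21 - Y * u23 := by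
        rw [hBm, hX, hY]; rw [neg_mul_neg]; field_simp; ring
      have cc : 1 ≤ α + γ := by nlinarith
      refine real_core s α γ X Y u13 u31 u21 u23 hs1 h.s2 hα hγ (by linarith) (by linarith)
        (by linarith) (by linarith) (by linarith) (by linarith)
        (by rw [r31] at hz1; linarith) (by rw [r13] at hz3; linarith) cc ?_ (by rw [eY]; exact hB3)
        (by rw [eX, ← eB]; exact c2') (by rw [← eB]; exact c1')
      rw [← hbz, ← eX, ← eY]; ring
  rintro y (⟨hy, hy'⟩ | ⟨m, rfl⟩)
  · have := hb (-y) hy'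
    rw [inner_neg_right] at this
    exact le_max_of_le_left this
  · have := main m
    simp only [Set.mem_ofPred_eq, inner_smul_right]
    linarith

lemma half_diff_bound (K : Set E2) (z b : E2) (M ρ : ℝ) (hM : 0 < M) (hρ : 0 < ρ)
    (hb : ∀ x ∈ K, (inner ℝ b x : ℝ) ≤ 1) (hb' : ∀ x ∈ K, -(inner ℝ b x : ℝ) ≤ 2 / M - 1)
    (hz : (inner ℝ b z : ℝ) = 1) (h : z ∈ ρ • ((2:ℝ)⁻¹ • (K - K))) : M ≤ ρ := by
  obtain ⟨_, ⟨_, ⟨x, hx, y, hy, rfl⟩, rfl⟩, rfl⟩ := h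
  simp only [inner_smul_right, inner_sub_right] at hz
  have h1 := hb x hx
  have h2 := hb' y hy
  have h3 : (2:ℝ)⁻¹ * ((inner ℝ b x : ℝ) - inner ℝ b y) ≤ 1 / M := by
    have : 2 / M = 2 * (1 / M) := by ring
    linarith
  have h4 := mul_le_mul_of_nonneg_left h3 hρ.le
  rw [hz, mul_one_div, le_div_iff₀ hM] at h4
  linarith

lemma exists_normed_supp (K : Set E2) (hK : Convex ℝ K) (h0 : (0:E2) ∈ interior K) (p : E2)
    (hp : p ∉ interior K) : ∃ a : E2, (inner ℝ a p : ℝ) = 1 ∧ ∀ x ∈ K, (inner ℝ a x : ℝ) ≤ 1 := by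
  obtain ⟨a, ha, h⟩ := exists_supp K hK ⟨0, h0⟩ p hp
  have hpos := supp_pos K a p ha h0 h
  refine ⟨(inner ℝ a p : ℝ)⁻¹ • a, ?_, fun x hx => ?_⟩
  · rw [real_inner_smul_left, inv_mul_cancel₀ hpos.ne']
  · rw [real_inner_smul_left, inv_mul_le_iff₀ hpos, mul_one]
    exact h x hx

lemma gauge_one_of_supp (K : Set E2) (hK : Convex ℝ K) (h0 : (0:E2) ∈ interior K) (a p : E2)
    (hp : p ∈ K) (h1 : (inner ℝ a p : ℝ) = 1) (h : ∀ x ∈ K, (inner ℝ a x : ℝ) ≤ 1) :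
    gauge K p = 1 := by
  have h0' : K ∈ nhds (0:E2) := mem_interior_iff_mem_nhds.1 h0
  apply le_antisymm (gauge_le_one_of_mem hp)
  by_contra hlt
  push Not at hlt
  rw [gauge_lt_one_iff_mem_interior hK h0'] at hlt
  refine not_int K a p ?_ (by rw [h1]; exact h) hlt
  rintro rfl
  simp at h1

lemma Conf.exists_z {s : ℝ} {K : Set E2} {p l : Fin 3 → E2} (h : Conf s K p l)
    (hgen : K ⊆ convexHull ℝ ((K ∩ -K) ∪ Set.range (fun i => (-s) • p i)))
    (hK : Convex ℝ K) (hcomp : IsCompact K) (h0 : (0:E2) ∈ interior K)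
    (p0 a : E2) (M : ℝ) (hM : 0 < M) (hM1 : M ≤ 1) (hp0 : p0 ∈ K) (hp0' : -p0 ∈ interior K)
    (ha1 : (inner ℝ a p0 : ℝ) = 1) (ha : ∀ x ∈ K, (inner ℝ a x : ℝ) ≤ 1)
    (haM : ∀ x ∈ K, -(inner ℝ a x : ℝ) ≤ 2 / M - 1) :
    ∃ z, z ∈ frontier K ∧ z ∈ frontier (-K) ∧
      ∀ ρ : ℝ, 0 < ρ → z ∈ ρ • ((2:ℝ)⁻¹ • (K - K)) → M ≤ ρ := by
  have hs1 := h.s1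
  have h0' : K ∈ nhds (0:E2) := mem_interior_iff_mem_nhds.1 h0
  obtain ⟨i, j, k, hij, hik, hjk, α, γ, hα, hγ, hp⟩ := h.sector p0
  have hcont := continuous_gauge hK h0'
  have hg0 : gauge K p0 = 1 := gauge_one_of_supp K hK h0 a p0 hp0 ha1 ha
  have hg0' : gauge K (-p0) < 1 := (gauge_lt_one_iff_mem_interior hK h0').2 hp0'
  have hgj : gauge K (p j) = 1 := gauge_one_of_supp K hK h0 (l j) (p j) (h.pK j) (h.one j) (h.le1 j)
  let X : ℝ → E2 := fun t => (1 - t) • p0 + t • ((-s) • p j)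
  have hX : Continuous X := by fun_prop
  let f : ℝ → ℝ := fun t => gauge K (X t) - gauge K (-(X t))
  have hf : Continuous f := (hcont.comp hX).sub (hcont.comp hX.neg)
  have f0 : 0 < f 0 := by simp [f, X]; linarith
  have f1 : f 1 < 0 := by
    have e1 : gauge K ((-s) • p j) ≤ 1 := gauge_le_one_of_mem (h.qK j)
    have e2 : gauge K (s • p j) = s := by
      rw [gauge_smul_of_nonneg (by linarith), hgj]; simp
    have e3 : f 1 = gauge K ((-s) • p j) - gauge K (s • p j) := by simp [f, X]
    rw [e3]; linarith
  obtain ⟨t, ⟨ht0, ht1⟩, htf⟩ : (0:ℝ) ∈ f '' Set.Icc 0 1 :=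
    intermediate_value_Icc' zero_le_one hf.continuousOn ⟨f1.le, f0.le⟩
  have ht1' : t < 1 := lt_of_le_of_ne ht1 (by rintro rfl; linarith)
  have hXt : X t = ((1 - t) * α) • p i - ((1 - t) * γ + t * s) • p j := by
    simp only [X]; rw [hp]; module
  have gji := h.hi j i hij.symm
  have hXne : X t ≠ 0 := by
    intro hx
    have := congrArg (fun v => (inner ℝ (l i) v : ℝ)) hXt
    simp only [hx, inner_zero_right, inner_sub_right, inner_smul_right, h.one] at this
    have e1 : 0 ≤ (1 - t) * α := mul_nonneg (by linarith) hα
    have e2 : 0 ≤ (1 - t) * γ := mul_nonneg (by linarith) hγ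
    have e3 : 0 ≤ t * s := mul_nonneg ht0 (by linarith)
    have e4 : t * s = 0 := by
      by_contra hne
      have : 0 < t * s := lt_of_le_of_ne e3 (Ne.symm hne)
      nlinarith
    have e5 : t = 0 := by
      rcases mul_eq_zero.1 e4 with h | h
      · exact h
      · linarith
    subst e5
    have : p0 = 0 := by simpa [X] using hx
    simp [this] at ha1
  have habs : Absorbent ℝ K := absorbent_nhds_zero h0'
  have hbd : Bornology.IsVonNBounded ℝ K := (NormedSpace.isVonNBounded_iff ℝ).2 hcomp.isBounded
  set g := gauge K (X t) with hg
  have hgpos : 0 < g := (gauge_pos habs hbd).2 hXne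
  have hgneg : gauge K (-(X t)) = g := by
    have : gauge K (X t) - gauge K (-(X t)) = 0 := htf
    linarith
  set z := g⁻¹ • X t with hz
  have hz1 : gauge K z = 1 := by
    rw [hz, gauge_smul_of_nonneg (by positivity), ← hg, smul_eq_mul, inv_mul_cancel₀ hgpos.ne']
  have hz2 : gauge K (-z) = 1 := by
    rw [hz, ← smul_neg, gauge_smul_of_nonneg (by positivity), hgneg, smul_eq_mul,
      inv_mul_cancel₀ hgpos.ne']
  have hzf : z ∈ frontier K := (gauge_eq_one_iff_mem_frontier hK h0').1 hz1
  have hzf2' : -z ∈ frontier K := (gauge_eq_one_iff_mem_frontier hK h0').1 hz2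
  have hzf' : z ∈ frontier (-K) := by
    have hn : -K ∈ nhds (0:E2) := by simpa using neg_mem_nhds_zero E2 h0'
    rw [← gauge_eq_one_iff_mem_frontier hK.neg hn, gauge_neg_set_eq_gauge_neg]
    exact hz2
  have hzK : z ∈ K := hcomp.isClosed.frontier_subset hzf
  have hzK' : -z ∈ K := hcomp.isClosed.frontier_subset hzf2'
  refine ⟨z, hzf, hzf', fun ρ hρ hzρ => ?_⟩
  obtain ⟨b, hb1, hb⟩ := exists_normed_supp K hK h0 z hzf.2
  have hzd : z = (g⁻¹ * ((1 - t) * α)) • p i - (g⁻¹ * ((1 - t) * γ + t * s)) • p j := by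
    rw [hz, hXt]; module
  have ht' : 0 ≤ 1 - t := by linarith
  have hbd2 := h.bound hgen hij hik hjk z hzK hzK' _ _ (by positivity) (by positivity) hzd b hb hb1
  set κ := g⁻¹ * (1 - t) with hκ
  set η := g⁻¹ * t with hη
  have hκ0 : 0 < κ := mul_pos (by positivity) (by linarith)
  have hη0 : 0 ≤ η := by positivity
  have hz3 : z = κ • p0 + (-(η * s)) • p j := by rw [hz]; simp only [X]; module
  have haz := ha z hzK
  have hbp := hb p0 hp0
  rcases eq_or_lt_of_le hη0 with hη1 | hη1
  · -- z parallel p0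
    rw [← hη1] at hz3
    have hz4 : z = κ • p0 := by rw [hz3]; simp
    have hz5 : κ = 1 := by
      rw [hz4, inner_smul_right] at haz hb1
      rw [ha1] at haz
      nlinarith
    rw [hz4, hz5, one_smul] at hzρ
    exact half_diff_bound K p0 a M ρ hM hρ ha haM ha1 hzρ
  · have hαpos : 0 < α := by
      rcases eq_or_lt_of_le hα with hα0 | hα0
      · exfalso
        rw [← hα0] at hp
        have hp' : p0 = (-γ) • p j := by rw [hp]; module
        have e1 := h.le1 j (-p0) (interior_subset hp0')
        rw [hp', inner_neg_right, inner_smul_right, h.one] at e1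
        have e2 := ha _ (h.qK j)
        rw [hp'] at ha1
        rw [inner_smul_right] at e2 ha1
        nlinarith
      · exact hα0
    have hBA : (inner ℝ b (p i) : ℝ) ≤ inner ℝ a (p i) := by
      have e1 : (inner ℝ a p0 : ℝ) = α * inner ℝ a (p i) - γ * inner ℝ a (p j) := by
        rw [hp, inner_sub_right, inner_smul_right, inner_smul_right]
      have e2 : (inner ℝ b p0 : ℝ) = α * inner ℝ b (p i) - γ * inner ℝ b (p j) := by
        rw [hp, inner_sub_right, inner_smul_right, inner_smul_right]
      have e3 : (inner ℝ a z : ℝ) = κ * inner ℝ a p0 + (-(η * s)) * inner ℝ a (p j) := by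
        rw [hz3, inner_add_right, inner_smul_right, inner_smul_right]
      have e4 : (inner ℝ b z : ℝ) = κ * inner ℝ b p0 + (-(η * s)) * inner ℝ b (p j) := by
        rw [hz3, inner_add_right, inner_smul_right, inner_smul_right]
      rw [ha1] at e1 e3
      rw [e3] at haz
      rw [hb1] at e4
      set P := (inner ℝ b p0 : ℝ)
      have s0 : 0 < s := by linarith
      -- multiply
      have q1 : γ * (κ * 1 + -(η * s) * (inner ℝ a (p j) : ℝ)) ≤ γ * 1 :=
        mul_le_mul_of_nonneg_left haz hγ
      have q2 : (γ * κ + η * s) * P ≤ (γ * κ + η * s) * 1 :=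
        mul_le_mul_of_nonneg_left hbp (by positivity)
      have q3 : (η * s * α) * (inner ℝ b (p i) : ℝ) ≤ (η * s * α) * inner ℝ a (p i) := by
        have r1 : (η * s * α) * (inner ℝ b (p i) : ℝ) = (γ * κ + η * s) * P - γ := by
          linear_combination (-(η * s)) * e2 + γ * e4
        have r2 : (η * s * α) * (inner ℝ a (p i) : ℝ) =
            η * s + γ * (η * s * inner ℝ a (p j)) := by
          linear_combination (-(η * s)) * e1
        rw [r1, r2]
        linarith
      exact le_of_mul_le_mul_left q3 (by positivity)
    refine half_diff_bound K z b M ρ hM hρ hb (fun x hx => (hbd2 x hx).trans (max_le ?_ ?_)) hb1 hzρ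
    · have : 1 ≤ 1 / M := by rw [le_div_iff₀ hM]; linarith
      have h2 : 2 / M = 2 * (1 / M) := by ring
      linarith
    · have := haM _ (h.qK i)
      rw [inner_smul_right] at this
      have := mul_le_mul_of_nonneg_left hBA (by linarith : 0 ≤ s)
      linarith

lemma Conf.final {s : ℝ} {K : Set E2} {p l : Fin 3 → E2} (h : Conf s K p l)
    (hgen : K ⊆ convexHull ℝ ((K ∩ -K) ∪ Set.range (fun i => (-s) • p i)))
    (hK : Convex ℝ K) (hcomp : IsCompact K) (h0 : (0:E2) ∈ interior K) :
    ∃ z : E2, z ∈ frontier (K ∩ (-K)) ∧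
         z ∈ tauB K • frontier ((2:ℝ)⁻¹ • (K - K)) ∧
         z ∈ frontier K ∩ frontier (-K) := by
  have h0K : (0:E2) ∈ K := interior_subset h0
  have h0' : K ∈ nhds (0:E2) := mem_interior_iff_mem_nhds.1 h0
  have h0n : -K ∈ nhds (0:E2) := by simpa using neg_mem_nhds_zero E2 h0'
  set B : Set E2 := (2:ℝ)⁻¹ • (K - K) with hB
  have hBconv : Convex ℝ B := (hK.sub hK).smul _
  have hBcomp : IsCompact B := by
    rw [hB, sub_eq_add_neg]; exact (hcomp.add hcomp.neg).smul _
  have hCB : K ∩ -K ⊆ B := by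
    rintro x ⟨hx, hx'⟩
    exact ⟨x - (-x), ⟨x, hx, -x, hx', rfl⟩, by simp only; module⟩
  have hC0 : K ∩ -K ∈ nhds (0:E2) := Filter.inter_mem h0' h0n
  have hB0 : B ∈ nhds (0:E2) := Filter.mem_of_superset hC0 hCB
  have hBabs : Absorbent ℝ B := absorbent_nhds_zero hB0
  have hBbd : Bornology.IsVonNBounded ℝ B := (NormedSpace.isVonNBounded_iff ℝ).2 hBcomp.isBounded
  have hBneg : ∀ x ∈ B, -x ∈ B := by
    rintro _ ⟨_, ⟨x, hx, y, hy, rfl⟩, rfl⟩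
    exact ⟨_, ⟨y, hy, x, hx, rfl⟩, by simp only; module⟩
  have hCcomp : IsCompact (K ∩ -K) := hcomp.inter_right hcomp.neg.isClosed
  have hgc := continuous_gauge hBconv hB0
  obtain ⟨p0, hp0, hmax⟩ := hCcomp.exists_isMaxOn ⟨0, h0K, by simpa using h0K⟩ hgc.continuousOn
  set M := gauge B p0 with hMdef
  have hmax' : ∀ x ∈ K ∩ -K, gauge B x ≤ M := fun x hx => hmax hx
  have hM1 : M ≤ 1 := gauge_le_one_of_mem (hCB hp0)
  have hM : 0 < M := by
    have hev : ∀ᶠ x in nhds (0:E2), x ∈ K ∩ -K := hC0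
    have hc1 : ContinuousAt (fun t : ℝ => t • p 0) 0 := by fun_prop
    have h1 : ∀ᶠ t in nhds (0:ℝ), t • p 0 ∈ K ∩ -K := by
      apply hc1; simpa using hC0
    obtain ⟨t, ht, htp⟩ := ((h1.filter_mono nhdsWithin_le_nhds).and
      (self_mem_nhdsWithin : Set.Ioi (0:ℝ) ∈ nhdsWithin 0 (Set.Ioi 0))).exists
    have htp' : 0 < t := htp
    refine lt_of_lt_of_le ((gauge_pos hBabs hBbd).2 ?_) (hmax' _ ht)
    intro h2
    have h3 := h.one 0
    rcases smul_eq_zero.1 h2 with h4 | h4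
    · linarith
    · rw [h4] at h3; simp at h3
  have hmemB : ∀ x, gauge B x ≤ M → x ∈ M • B := by
    intro x hx
    rw [Set.mem_smul_set_iff_inv_smul_mem₀ hM.ne', ← hBcomp.isClosed.closure_eq,
      ← gauge_le_one_iff_mem_closure hBconv hB0, gauge_smul_of_nonneg (by positivity), smul_eq_mul,
      inv_mul_le_iff₀ hM, mul_one]
    exact hx
  have htau : tauB K = M := by
    apply le_antisymm
    · exact csInf_le ⟨0, fun x hx => hx.1.le⟩ ⟨hM, fun x hx => hmemB x (hmax' x hx)⟩
    · refine le_csInf ⟨M, hM, fun x hx => hmemB x (hmax' x hx)⟩ ?_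
      rintro ρ ⟨hρ, hsub⟩
      exact gauge_le_of_mem hρ.le (hsub hp0)
  -- suffices
  suffices hz : ∃ z, z ∈ frontier K ∧ z ∈ frontier (-K) ∧ ∀ ρ : ℝ, 0 < ρ → z ∈ ρ • B → M ≤ ρ by
    obtain ⟨z, hz1, hz2, hz3⟩ := hz
    have hzC : z ∈ K ∩ -K :=
      ⟨hcomp.isClosed.frontier_subset hz1, hcomp.neg.isClosed.frontier_subset hz2⟩
    refine ⟨z, ⟨subset_closure hzC, fun hi => hz1.2 (interior_mono Set.inter_subset_left hi)⟩, ?_,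
      hz1, hz2⟩
    have hge : gauge B z = M := by
      apply le_antisymm (hmax' z hzC)
      rw [gauge_def]
      refine le_csInf hBabs.gauge_set_nonempty ?_
      rintro ρ ⟨hρ, hzρ⟩
      exact hz3 ρ hρ hzρ
    rw [htau, Set.mem_smul_set_iff_inv_smul_mem₀ hM.ne',
      ← gauge_eq_one_iff_mem_frontier hBconv hB0, gauge_smul_of_nonneg (by positivity), hge,
      smul_eq_mul, inv_mul_cancel₀ hM.ne']
  -- norming functional
  have norming : ∀ p0 : E2, gauge B p0 = M → p0 ∈ K ∩ -K → ∃ a : E2, (inner ℝ a p0 : ℝ) = 1 ∧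
      (∀ x ∈ B, (inner ℝ a x : ℝ) ≤ 1 / M) ∧ (∀ x ∈ K ∩ -K, (inner ℝ a x : ℝ) ≤ 1) := by
    intro p0 hg hp0
    have hnot : M⁻¹ • p0 ∉ interior B := by
      rw [← gauge_lt_one_iff_mem_interior hBconv hB0, gauge_smul_of_nonneg (by positivity), hg,
        smul_eq_mul, inv_mul_cancel₀ hM.ne']
      exact lt_irrefl _
    obtain ⟨a, ha1, ha⟩ := exists_normed_supp B hBconv (mem_interior_iff_mem_nhds.2 hB0) _ hnot
    have hB1 : ∀ x ∈ B, (inner ℝ (M⁻¹ • a) x : ℝ) ≤ 1 / M := by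
      intro x hx
      rw [real_inner_smul_left, one_div]
      exact mul_le_of_le_one_right (by positivity) (ha x hx)
    refine ⟨M⁻¹ • a, ?_, hB1, ?_⟩
    · rw [real_inner_smul_left, ← inner_smul_right]; exact ha1
    · intro x hx
      obtain ⟨y, hy, rfl⟩ := hmemB x (hmax' x hx)
      have := hB1 y hy
      simp only [inner_smul_right]
      rw [le_div_iff₀ hM] at this
      linarith
  -- one-sided case
  have side : ∀ p0 : E2, gauge B p0 = M → p0 ∈ K ∩ -K → -p0 ∈ interior K →
      ∃ z, z ∈ frontier K ∧ z ∈ frontier (-K) ∧ ∀ ρ : ℝ, 0 < ρ → z ∈ ρ • B → M ≤ ρ := by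
    intro p0 hg hp0 hint
    obtain ⟨a, ha1, haB, haC⟩ := norming p0 hg hp0
    have haK : ∀ x ∈ K, (inner ℝ a x : ℝ) ≤ 1 := by
      intro x hx
      by_contra hcon
      push Not at hcon
      have hc1 : ContinuousAt (fun t : ℝ => -(p0 + t • (x - p0))) 0 := by fun_prop
      have h1 : ∀ᶠ t in nhds (0:ℝ), -(p0 + t • (x - p0)) ∈ K := by
        apply hc1; simpa using mem_interior_iff_mem_nhds.1 hint
      have h2 : ∀ᶠ t in nhds (0:ℝ), t < 1 := gt_mem_nhds zero_lt_one
      obtain ⟨t, ⟨ht, ht1⟩, htp⟩ := (((h1.and h2).filter_mono nhdsWithin_le_nhds).and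
        (self_mem_nhdsWithin : Set.Ioi (0:ℝ) ∈ nhdsWithin 0 (Set.Ioi 0))).exists
      have htp' : 0 < t := htp
      have hm : p0 + t • (x - p0) ∈ K := hK.add_smul_sub_mem hp0.1 hx ⟨htp'.le, ht1.le⟩
      have := haC _ ⟨hm, ht⟩
      rw [inner_add_right, inner_smul_right, inner_sub_right, ha1] at this
      nlinarith
    refine h.exists_z hgen hK hcomp h0 p0 a M hM hM1 hp0.1 hint ha1 haK ?_
    intro x hx
    have := haB _ (Set.smul_mem_smul_set (Set.sub_mem_sub hp0.1 hx))
    rw [inner_smul_right, inner_sub_right, ha1] at this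
    have h2 : 2 / M = 2 * (1 / M) := by ring
    linarith
  by_cases c1 : -p0 ∈ interior K
  · exact side p0 rfl hp0 c1
  by_cases c2 : p0 ∈ interior K
  · refine side (-p0) ?_ ⟨hp0.2, by simpa using hp0.1⟩ (by simpa using c2)
    rw [gauge_neg hBneg]
  · refine ⟨p0, ⟨subset_closure hp0.1, c2⟩, ⟨subset_closure hp0.2, ?_⟩, ?_⟩
    · rw [← gauge_lt_one_iff_mem_interior hK.neg h0n, gauge_neg_set_eq_gauge_neg,
        gauge_lt_one_iff_mem_interior hK h0']
      exact c1
    · intro ρ hρ hz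
      exact gauge_le_of_mem hρ.le hz

theorem stmt9 (K : Set E2) (hK : IsConvexBody K) (hc : MinkCentered K)
    (hs : phiR < minkAsym K) :
    ∃ p1 p2 p3 : E2, WellSpread K p1 p2 p3 ∧
      (let s := minkAsym K
       let K' := convexHull ℝ ((K ∩ (-K)) ∪ {-s • p1, -s • p2, -s • p3})
       MinkCentered K' ∧
       minkAsym K' = minkAsym K ∧
       tauB K' ≥ tauB K ∧
       ∃ p : E2, p ∈ frontier (K' ∩ (-K')) ∧
         p ∈ tauB K' • frontier ((2:ℝ)⁻¹ • (K' - K')) ∧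
         p ∈ frontier K' ∩ frontier (-K')) := by
  obtain ⟨hconv, hcomp, hint⟩ := hK
  set s := minkAsym K with hsdef
  have h5 : Real.sqrt 5 ^ 2 = 5 := Real.sq_sqrt (by norm_num)
  have h5' : 0 ≤ Real.sqrt 5 := Real.sqrt_nonneg 5
  have hphi : phiR = (1 + Real.sqrt 5) / 2 := rfl
  have hphi1 : 1 < phiR := by rw [hphi]; nlinarith
  have hphi2 : phiR ^ 2 = phiR + 1 := by rw [hphi]; linear_combination h5 / 4
  have s1 : 1 < s := by linarith
  have s0 : 0 < s := by linarith
  have s2 : s + 1 < s ^ 2 := by nlinarith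
  have h0 : (0:E2) ∈ interior K := zero_int K hconv hint s s0 hc
  obtain ⟨lam, a, hlam, hN, hsum⟩ := carath _ _ (exists_touch K ⟨hconv, hcomp, hint⟩ hc s0)
  rw [← hsdef] at hN
  choose hnorm p hpL hsupp using hN
  have ha0 : ∀ i, a i ≠ 0 := by
    intro i hi
    have := hnorm i
    rw [hi] at this; simp at this
  have hh : ∀ i, 0 < (inner ℝ (a i) (p i) : ℝ) := fun i => supp_pos K _ _ (ha0 i) h0 (hsupp i)
  have hqK : ∀ i, (-s) • p i ∈ K := by
    intro i
    obtain ⟨y, hy, hyp⟩ := hpL i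
    simp only at hyp
    rw [← hyp, smul_smul]
    have : -s * -s⁻¹ = 1 := by field_simp
    rw [this, one_smul]; exact hy
  have hLK : (-s⁻¹) • K ⊆ K := by
    rintro _ ⟨y, hy, rfl⟩
    obtain ⟨k, hk, hky⟩ := hc hy
    have hk' : -k ∈ K := by simpa using hk
    convert hk' using 1
    simp only at hky ⊢
    rw [← hky, smul_smul, ← hsdef]
    field_simp
    simp
  have hpK : ∀ i, p i ∈ K := fun i => hLK (hpL i)
  have hpnK : ∀ i, -p i ∈ K := by
    intro i
    have := hconv (hqK i) (interior_subset h0) (a := s⁻¹) (b := 1 - s⁻¹) (by positivity)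
      (by rw [sub_nonneg]; exact inv_le_one_of_one_le₀ s1.le) (by ring)
    convert this using 1
    rw [smul_zero, add_zero, smul_smul]
    have : s⁻¹ * -s = -1 := by field_simp
    rw [this]; simp
  -- normalised functionals
  let l : Fin 3 → E2 := fun i => (inner ℝ (a i) (p i) : ℝ)⁻¹ • a i
  let w : Fin 3 → ℝ := fun i => lam i * inner ℝ (a i) (p i)
  have hl1 : ∀ i, (inner ℝ (l i) (p i) : ℝ) = 1 := by
    intro i
    simp only [l]
    rw [real_inner_smul_left, inv_mul_cancel₀ (hh i).ne']
  have hle1 : ∀ i, ∀ x ∈ K, (inner ℝ (l i) x : ℝ) ≤ 1 := by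
    intro i x hx
    simp only [l]
    rw [real_inner_smul_left, inv_mul_le_iff₀ (hh i), mul_one]
    exact hsupp i x hx
  have hlo : ∀ i j, -(1/s) ≤ (inner ℝ (l j) (p i) : ℝ) := by
    intro i j
    have := hle1 j _ (hqK i)
    rw [inner_smul_right] at this
    rw [neg_le, le_div_iff₀ s0]
    linarith
  have hw0 : ∀ i, 0 ≤ w i := fun i => mul_nonneg (hlam.1 i) (hh i).le
  have hwsum : ∀ x : E2, w 0 * inner ℝ (l 0) x + w 1 * inner ℝ (l 1) x
      + w 2 * (inner ℝ (l 2) x : ℝ) = 0 := by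
    intro x
    have h1 := congrArg (fun v => (inner ℝ v x : ℝ)) hsum
    simp only [Fin.sum_univ_three, inner_add_left, real_inner_smul_left, inner_zero_left] at h1
    simp only [w, l, real_inner_smul_left]
    have e : ∀ i, lam i * (inner ℝ (a i) (p i) : ℝ) * ((inner ℝ (a i) (p i) : ℝ)⁻¹ * inner ℝ (a i) x)
        = lam i * inner ℝ (a i) x := by
      intro i
      have := (hh i).ne'
      field_simp
    rw [e, e, e]; exact h1
  have hW : 0 < w 0 + w 1 + w 2 := by
    have hl := hlam.2
    rw [Fin.sum_univ_three] at hl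
    by_contra hcon
    have z0 : w 0 = 0 := by linarith [hw0 0, hw0 1, hw0 2]
    have z1 : w 1 = 0 := by linarith [hw0 0, hw0 1, hw0 2]
    have z2 : w 2 = 0 := by linarith [hw0 0, hw0 1, hw0 2]
    have e : ∀ i, w i = 0 → lam i = 0 := by
      intro i hi
      rcases mul_eq_zero.1 hi with h | h
      · exact h
      · exact absurd h (hh i).ne'
    rw [e 0 z0, e 1 z1, e 2 z2] at hl
    norm_num at hl
  have r0 := hwsum (p 0)
  have r1 := hwsum (p 1)
  have r2 := hwsum (p 2)
  rw [hl1] at r0 r1 r2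
  have b0 := real_bd s (w 0) (w 1) (w 2) _ _ s1 (hw0 2) (hw0 1) (by linarith [r0]) (hlo 0 1) (hlo 0 2)
  have b1 := real_bd s (w 1) (w 0) (w 2) _ _ s1 (hw0 2) (hw0 0) (by linarith [r1]) (hlo 1 0) (hlo 1 2)
  have b2 := real_bd s (w 2) (w 0) (w 1) _ _ s1 (hw0 1) (hw0 0) (by linarith [r2]) (hlo 2 0) (hlo 2 1)
  have n01 := real_neg s (w 0) (w 1) (w 2) (inner ℝ (l 1) (p 0))
    (inner ℝ (l 2) (p 0)) s1 s2 hW (hw0 2) (hw0 1) (by linarith) (by linarith)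
    (by linarith [r0]) (hlo 0 2)
  have n02 := real_neg s (w 0) (w 2) (w 1) (inner ℝ (l 2) (p 0))
    (inner ℝ (l 1) (p 0)) s1 s2 (by linarith) (hw0 1) (hw0 2) (by linarith)
    (by linarith) (by linarith [r0]) (hlo 0 1)
  have n10 := real_neg s (w 1) (w 0) (w 2) (inner ℝ (l 0) (p 1))
    (inner ℝ (l 2) (p 1)) s1 s2 (by linarith) (hw0 2) (hw0 0) (by linarith)
    (by linarith) (by linarith [r1]) (hlo 1 2)
  have n12 := real_neg s (w 1) (w 2) (w 0) (inner ℝ (l 2) (p 1))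
    (inner ℝ (l 0) (p 1)) s1 s2 (by linarith) (hw0 0) (hw0 2) (by linarith)
    (by linarith) (by linarith [r1]) (hlo 1 0)
  have n20 := real_neg s (w 2) (w 0) (w 1) (inner ℝ (l 0) (p 2))
    (inner ℝ (l 1) (p 2)) s1 s2 (by linarith) (hw0 1) (hw0 0) (by linarith)
    (by linarith) (by linarith [r2]) (hlo 2 1)
  have n21 := real_neg s (w 2) (w 1) (w 0) (inner ℝ (l 1) (p 2))
    (inner ℝ (l 0) (p 2)) s1 s2 (by linarith) (hw0 0) (hw0 1) (by linarith)
    (by linarith) (by linarith [r2]) (hlo 2 0)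
  have conf : Conf s K p l := by
    refine ⟨s1, s2, hl1, hle1, fun i j _ => hlo i j, ?_, hpK, hqK⟩
    intro i j hij
    fin_cases i <;> fin_cases j <;> first | exact absurd rfl hij | assumption
  refine ⟨p 0, p 1, p 2, ?_, ?_⟩
  · have hasym : ∀ i, IsAsymPoint K (p i) := by
      intro i
      have hni := not_int K (a i) (p i) (ha0 i) (hsupp i)
      exact ⟨⟨subset_closure (hpK i), hni⟩, subset_closure (hpL i),
        fun hi => hni (interior_mono hLK hi)⟩
    refine ⟨hasym 0, hasym 1, hasym 2, a 0, a 1, a 2, ha0 0, ha0 1, ha0 2, hsupp 0, hsupp 1,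
      hsupp 2, conf.zero_int, ?_⟩
    rw [← hsum]
    refine (convex_convexHull ℝ _).sum_mem (fun i _ => hlam.1 i) hlam.2 (fun i _ => ?_)
    apply subset_convexHull
    fin_cases i <;> simp
  · intro s' K'
    have hs' : s' = s := rfl
    have hrange : ({-s' • p 0, -s' • p 1, -s' • p 2} : Set E2) = Set.range (fun i => (-s) • p i) := by
      ext x
      simp only [Set.mem_insert_iff, Set.mem_singleton_iff, Set.mem_range, Fin.exists_fin_succ, hs']
      simp [eq_comm]
    have hK' : K' = convexHull ℝ ((K ∩ -K) ∪ Set.range (fun i => (-s) • p i)) := by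
      rw [← hrange]
    clear_value K'
    have hCK' : K ∩ -K ⊆ K' := by
      rw [hK']; exact Set.subset_union_left.trans (subset_convexHull ℝ _)
    have hK'K : K' ⊆ K := by
      rw [hK']
      refine convexHull_min ?_ hconv
      rintro x (hx | ⟨i, rfl⟩)
      · exact hx.1
      · exact hqK i
    have hqK' : ∀ i, (-s) • p i ∈ K' := by
      intro i
      rw [hK']; exact subset_convexHull ℝ _ (Or.inr ⟨i, rfl⟩)
    have hpK' : ∀ i, p i ∈ K' := fun i => hCK' ⟨hpK i, hpnK i⟩
    have hCC : K' ∩ -K' = K ∩ -K := by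
      apply Set.Subset.antisymm
      · rintro x ⟨h1, h2⟩; exact ⟨hK'K h1, hK'K h2⟩
      · rintro x ⟨h1, h2⟩
        exact ⟨hCK' ⟨h1, h2⟩, hCK' ⟨h2, by simpa using h1⟩⟩
    have hconv' : Convex ℝ K' := by rw [hK']; exact convex_convexHull ℝ _
    have hcomp' : IsCompact K' := by
      rw [hK']
      exact compact_hull _ ((hcomp.inter_right hcomp.neg.isClosed).union
        (Set.finite_range _).isCompact)
    have h0K' : (0:E2) ∈ interior K' := by
      have h1 : K ∈ nhds (0:E2) := mem_interior_iff_mem_nhds.1 h0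
      have h2 : -K ∈ nhds (0:E2) := by simpa using neg_mem_nhds_zero E2 h1
      exact mem_interior_iff_mem_nhds.2 (Filter.mem_of_superset (Filter.inter_mem h1 h2) hCK')
    have conf' : Conf s K' p l :=
      ⟨s1, s2, hl1, fun i x hx => hle1 i x (hK'K hx), conf.lo, conf.hi, hpK', hqK'⟩
    have hcent : K' ⊆ s • (-K') := by
      have hcs : Convex ℝ (s • (-K')) := hconv'.neg.smul _
      conv_lhs => rw [hK']
      refine convexHull_min ?_ hcs
      rintro x (hx | ⟨i, rfl⟩)
      · refine ⟨s⁻¹ • x, ?_, ?_⟩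
        · rw [Set.mem_neg]
          have hnx : -x ∈ K' := hCK' ⟨hx.2, by simpa using hx.1⟩
          have := hconv' hnx (interior_subset h0K') (a := s⁻¹) (b := 1 - s⁻¹) (by positivity)
            (by rw [sub_nonneg]; exact inv_le_one_of_one_le₀ s1.le) (by ring)
          simpa using this
        · simp only; rw [smul_smul, mul_inv_cancel₀ s0.ne', one_smul]
      · exact ⟨-p i, by simpa using hpK' i, by simp⟩
    have hasymK' : minkAsym K' = s := by
      have hmem : s ∈ {ρ : ℝ | 0 < ρ ∧ ∃ c : E2, K' - {c} ⊆ ρ • ({c} - K')} := by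
        refine ⟨s0, 0, ?_⟩
        simpa using hcent
      apply le_antisymm
      · exact csInf_le ⟨0, fun x hx => hx.1.le⟩ hmem
      · refine le_csInf ⟨s, hmem⟩ ?_
        rintro ρ ⟨hρ, c, hsub⟩
        have key : ∀ i, (1 + ρ) * (inner ℝ (l i) c : ℝ) ≤ ρ - s := by
          intro i
          obtain ⟨_, ⟨c', hc', x, hx, rfl⟩, hy⟩ := hsub (Set.sub_mem_sub (hqK' i) (Set.mem_singleton c))
          rw [Set.mem_singleton_iff] at hc'
          subst hc'
          have h1 := congrArg (fun v => (inner ℝ (l i) v : ℝ)) hy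
          simp only [inner_sub_right, inner_smul_right, hl1] at h1
          have h2 := mul_le_mul_of_nonneg_left (hle1 i x (hK'K hx)) hρ.le
          linarith
        have k0 := mul_le_mul_of_nonneg_left (key 0) (hw0 0)
        have k1 := mul_le_mul_of_nonneg_left (key 1) (hw0 1)
        have k2 := mul_le_mul_of_nonneg_left (key 2) (hw0 2)
        have k3 := hwsum c
        have k4 : 0 ≤ (w 0 + w 1 + w 2) * (ρ - s) := by
          have : (1 + ρ) * (w 0 * inner ℝ (l 0) c + w 1 * inner ℝ (l 1) c
            + w 2 * (inner ℝ (l 2) c : ℝ)) = 0 := by rw [k3, mul_zero]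
          linarith
        have := nonneg_of_mul_nonneg_right k4 hW
        linarith
    refine ⟨?_, hasymK', ?_, ?_⟩
    · unfold MinkCentered
      rw [hasymK']; exact hcent
    · unfold tauB
      refine csInf_le_csInf ⟨0, fun x hx => hx.1.le⟩ ⟨1, one_pos, ?_⟩ ?_
      · rintro x ⟨hx, hx'⟩
        rw [one_smul]
        exact ⟨x - (-x), ⟨x, hx, -x, hx', rfl⟩, by simp only; module⟩
      · rintro ρ ⟨hρ, hsub⟩
        refine ⟨hρ, ?_⟩
        rw [← hCC]
        exact hsub.trans (Set.smul_set_mono (Set.smul_set_mono (Set.sub_subset_sub hK'K hK'K)))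
    · refine conf'.final ?_ hconv' hcomp' h0K'
      rw [hCC]; exact hK'.le
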